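/- For every τ in the complex upper half-plane ℍ, one has (q·d/dq) h(τ) = −E_odd(τ)·(h(τ)² − 64). -/

import Mathlib

noncomputable section
open Complex Real

/-- `q = e^{2πiτ}`. -/
def nome (τ : ℂ) : ℂ := Complex.exp (2 * (π : ℂ) * I * τ)

/-- Dedekind eta function `η(τ) = e^{πiτ/12} ∏_{n≥1} (1 − qⁿ)`. -/
def dedekindEta (τ : ℂ) : ℂ :=
  Complex.exp ((π : ℂ) * I * τ / 12) * ∏' n : ℕ, (1 - nome τ ^ (n + 1))

/-- Sum of the positive odd divisors of `n`. -/
def sigmaOdd (n : ℕ) : ℕ := ∑ d ∈ n.divisors.filter (fun d => Odd d), d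

/-- `E*(τ) = 1 + 24 Σ_{n≥1} σ_odd(n) qⁿ`. -/
def Estar (τ : ℂ) : ℂ := 1 + 24 * ∑' n : ℕ, (sigmaOdd (n + 1) : ℂ) * nome τ ^ (n + 1)

/-- `E_odd(τ) = Σ_{n≥0} σ₁(2n+1) q^{2n+1}`. -/
def Eodd (τ : ℂ) : ℂ :=
  ∑' n : ℕ, ((∑ d ∈ (2 * n + 1).divisors, d : ℕ) : ℂ) * nome τ ^ (2 * n + 1)

/-- `h(τ) = (η(2τ)⁴/η(4τ)⁸)·E*(2τ)`. -/
def hfun (τ : ℂ) : ℂ := dedekindEta (2 * τ) ^ 4 / dedekindEta (4 * τ) ^ 8 * Estar (2 * τ)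

open Filter Topology

/-- Filter of points with imaginary part tending to infinity. -/
def imInf : Filter ℂ := Filter.comap Complex.im Filter.atTop

open UpperHalfPlane ModularForm MatrixGroups Manifold in
lemma key_zero (k : ℕ) (hk : k < 12) (f : ℂ → ℂ)
    (hf : DifferentiableOn ℂ f UpperHalfPlane.upperHalfPlaneSet)
    (hS : ∀ z : ℂ, 0 < z.im → f (-1 / z) = z ^ k * f z)
    (hT : ∀ z : ℂ, 0 < z.im → f (z + 1) = f z)
    (h0 : Tendsto f imInf (𝓝 0)) : ∀ z : ℂ, 0 < z.im → f z = 0 := by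
  let g : UpperHalfPlane → ℂ := fun z => f z
  have gS : g ∣[(k : ℤ)] ModularGroup.S = g := by
    ext z
    rw [SlashInvariantForm.slash_S_apply]
    have h1 := hS z z.2
    have hz : (z : ℂ) ≠ 0 := z.ne_zero
    simp only [g]
    have h2 : (-(z:ℂ))⁻¹ = -1 / z := by
      field_simp
    rw [h2, h1, zpow_neg, zpow_natCast]
    field_simp
  have gT : g ∣[(k : ℤ)] ModularGroup.T = g := by
    ext z
    rw [SL_slash_apply, modular_T_smul]
    have := hT z z.2
    have h1 : denom (ModularGroup.T : GL (Fin 2) ℝ) z = 1 := by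
      rw [ModularGroup.denom_apply]
      simp [ModularGroup.T]
    simp [g, add_comm (1 : ℂ), this, h1]
  have hinv := SlashInvariantForm.slash_action_generators_SL2Z gS gT
  have hmd : MDiff g := by
    rw [UpperHalfPlane.mdifferentiable_iff]
    refine hf.congr fun z hz => ?_
    simp [g, ofComplex_apply_of_im_pos hz]
  have hz : IsZeroAtImInfty g := by
    change Tendsto g atImInfty (𝓝 0)
    refine h0.comp ?_
    rw [imInf, atImInfty]
    rw [tendsto_comap_iff]
    exact tendsto_comap
  let F : CuspForm 𝒮ℒ (k : ℤ) :=
    { toFun := g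
      slash_action_eq' := fun A hA => by
        obtain ⟨A, rfl⟩ := hA
        exact hinv A
      holo' := hmd
      zero_at_cusps' := fun hc => by
        rw [Subgroup.IsArithmetic.isCusp_iff_isCusp_SL2Z] at hc
        rw [OnePoint.isZeroAt_iff_forall_SL2Z hc]
        intro γ _
        rw [hinv]
        exact hz }
  have hF : F = 0 := rank_zero_iff_forall_zero.mp
    (CuspForm.rank_eq_zero_of_weight_lt_twelve (by exact_mod_cast hk)) F
  intro z hz'
  have := congrArg (fun G : CuspForm 𝒮ℒ (k : ℤ) => G ⟨z, hz'⟩) hF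
  exact this

/-- `E₂` as a function on `ℂ`. -/
def EC (z : ℂ) : ℂ := EisensteinSeries.E2 (UpperHalfPlane.ofComplex z)

lemma EC_eq (z : ℂ) (hz : 0 < z.im) : EC z = EisensteinSeries.E2 ⟨z, hz⟩ := by
  rw [EC, UpperHalfPlane.ofComplex_apply_of_im_pos hz]

lemma EC_diff : DifferentiableOn ℂ EC UpperHalfPlane.upperHalfPlaneSet :=
  UpperHalfPlane.mdifferentiable_iff.mp E2_mdifferentiable

lemma EC_diffAt (z : ℂ) (hz : 0 < z.im) : DifferentiableAt ℂ EC z :=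
  EC_diff.differentiableAt (UpperHalfPlane.isOpen_upperHalfPlaneSet.mem_nhds hz)

lemma EC_hasSum (z : ℂ) (hz : 0 < z.im) :
    HasSum (fun m : ℕ => (if m = 0 then 1 else -24 * (ArithmeticFunction.sigma 1 m : ℂ)) * nome z ^ m)
      (EC z) := by
  rw [EC_eq z hz]
  exact EisensteinSeries.hasSum_qExpansion_E2 ⟨z, hz⟩

lemma nome_add_one (z : ℂ) : nome (z + 1) = nome z := by
  rw [nome, nome, mul_add, Complex.exp_add, mul_one, Complex.exp_two_pi_mul_I, mul_one]

lemma EC_T (z : ℂ) (hz : 0 < z.im) : EC (z + 1) = EC z := by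
  have h := EC_hasSum (z + 1) (by simpa using hz)
  rw [nome_add_one] at h
  exact h.unique (EC_hasSum z hz)

/-- The constant of the transformation of `E₂`. -/
def cc : ℂ := 6 / (π * I)

lemma EC_S (z : ℂ) (hz : 0 < z.im) : EC (-1 / z) = z ^ 2 * EC z + cc * z := by
  have h := congrFun (EisensteinSeries.E2_slash_action ModularGroup.S) ⟨z, hz⟩
  rw [SlashInvariantForm.slash_S_apply] at h
  have hz0 : z ≠ 0 := by rintro rfl; simp at hz
  have him : 0 < (-1 / z).im := by
    have := UpperHalfPlane.im_inv_neg_coe_pos ⟨z, hz⟩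
    have h3 : (-z)⁻¹ = -1 / z := by field_simp
    rw [← h3]
    exact this
  have h2 : (UpperHalfPlane.mk (-((⟨z, hz⟩ : UpperHalfPlane) : ℂ))⁻¹
    (UpperHalfPlane.im_inv_neg_coe_pos ⟨z, hz⟩) : UpperHalfPlane) = ⟨-1 / z, him⟩ := by
    ext
    change (-z)⁻¹ = _
    field_simp
  rw [h2, ← EC_eq] at h
  simp only [Pi.sub_apply, Pi.smul_apply, EisensteinSeries.D2_S, ← EC_eq, riemannZeta_two,
    smul_eq_mul] at h
  have hpi : (π : ℂ) ≠ 0 := by exact_mod_cast Real.pi_ne_zero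
  rw [zpow_neg] at h
  change _ * (z ^ (2:ℤ))⁻¹ = _ - _ * (_ / z) at h
  rw [zpow_ofNat] at h
  have h3 : EC (-1 / z) = (EC (-1/z) * (z^2)⁻¹) * z ^ 2 := by field_simp
  rw [h3, h, cc]
  field_simp
  linear_combination (-6) * Complex.I_sq

/-- Weight two forms (half-period values). -/
def ea (z : ℂ) : ℂ := 2 * EC (2 * z) - EC z
/-- Weight two forms (half-period values). -/
def eb (z : ℂ) : ℂ := EC (z / 2) / 2 - EC z
/-- Weight two forms (half-period values). -/
def ec (z : ℂ) : ℂ := EC ((z + 1) / 2) / 2 - EC z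

lemma im_two_mul (z : ℂ) (hz : 0 < z.im) : 0 < (2 * z).im := by
  simpa using hz

lemma im_div_two (z : ℂ) (hz : 0 < z.im) : 0 < (z / 2).im := by
  simpa using hz

lemma im_add_div_two (z : ℂ) (hz : 0 < z.im) : 0 < ((z + 1) / 2).im := by
  simpa using hz

lemma im_S (z : ℂ) (hz : 0 < z.im) : 0 < (-1 / z).im := by
  have := UpperHalfPlane.im_inv_neg_coe_pos ⟨z, hz⟩
  have hz0 : z ≠ 0 := by rintro rfl; simp at hz
  have h3 : (-z)⁻¹ = -1 / z := by field_simp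
  rw [← h3]
  exact this

lemma ea_T (z : ℂ) (hz : 0 < z.im) : ea (z + 1) = ea z := by
  rw [ea, ea, EC_T z hz, show 2 * (z + 1) = 2 * z + 1 + 1 by ring,
    EC_T _ (by simpa using hz), EC_T _ (by simpa using hz)]

lemma eb_T (z : ℂ) (hz : 0 < z.im) : eb (z + 1) = ec z := by
  rw [eb, ec, EC_T z hz]

lemma ec_T (z : ℂ) (hz : 0 < z.im) : ec (z + 1) = eb z := by
  rw [eb, ec, EC_T z hz, show (z + 1 + 1) / 2 = z / 2 + 1 by ring,
    EC_T _ (im_div_two z hz)]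

lemma ea_S (z : ℂ) (hz : 0 < z.im) : ea (-1 / z) = z ^ 2 * eb z := by
  have hz0 : z ≠ 0 := by rintro rfl; simp at hz
  rw [ea, eb, EC_S z hz, show 2 * (-1 / z) = -1 / (z / 2) by field_simp,
    EC_S _ (im_div_two z hz)]
  ring

lemma eb_S (z : ℂ) (hz : 0 < z.im) : eb (-1 / z) = z ^ 2 * ea z := by
  have hz0 : z ≠ 0 := by rintro rfl; simp at hz
  rw [ea, eb, EC_S z hz, show (-1 / z) / 2 = -1 / (2 * z) by field_simp,
    EC_S _ (im_two_mul z hz)]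
  ring

lemma ec_S (z : ℂ) (hz : 0 < z.im) : ec (-1 / z) = z ^ 2 * ec z := by
  have hz0 : z ≠ 0 := by rintro rfl; simp at hz
  have hw : 0 < ((z - 1) / 2).im := by simpa using hz
  have hw0 : z - 1 ≠ 0 := by intro h; rw [h] at hw; simp at hw
  have hu : 0 < (-1 / ((z - 1) / 2) - 1 - 1).im := by simpa using im_S _ hw
  have h1 : EC (-1 / ((z - 1) / 2)) = EC (-1 / ((z - 1) / 2) - 1 - 1) := by
    have h6 := EC_T _ hu
    have h7 := EC_T (-1 / ((z - 1) / 2) - 1) (by simpa using hu)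
    rw [sub_add_cancel] at h6 h7
    exact h7.trans h6
  have h2 : EC ((z + 1) / 2) = EC ((z - 1) / 2) := by
    rw [← EC_T _ hw]
    congr 1
    ring
  have h3 : (-1 / z + 1) / 2 = -1 / (-1 / ((z - 1) / 2) - 1 - 1) := by
    have h5 : -1 / ((z - 1) / 2) - 1 - 1 = -(2 * z) / (z - 1) := by field_simp; ring
    rw [h5]
    field_simp
    ring
  rw [ec, ec, EC_S z hz, h3, EC_S _ hu, ← h1, h2, EC_S _ hw]
  field_simp
  ring

lemma ea_diff (z : ℂ) (hz : 0 < z.im) : DifferentiableAt ℂ ea z := by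
  have h1 := EC_diffAt z hz
  have h2 : DifferentiableAt ℂ (fun w => EC (2 * w)) z :=
    (EC_diffAt _ (im_two_mul z hz)).comp z (by fun_prop)
  exact (h2.const_mul 2).sub h1

lemma eb_diff (z : ℂ) (hz : 0 < z.im) : DifferentiableAt ℂ eb z := by
  have h1 := EC_diffAt z hz
  have h2 : DifferentiableAt ℂ (fun w => EC (w / 2)) z :=
    DifferentiableAt.comp z (g := EC) (EC_diffAt _ (im_div_two z hz)) (by fun_prop)
  exact (h2.div_const 2).sub h1

lemma ec_diff (z : ℂ) (hz : 0 < z.im) : DifferentiableAt ℂ ec z := by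
  have h1 := EC_diffAt z hz
  have h2 : DifferentiableAt ℂ (fun w => EC ((w + 1) / 2)) z :=
    DifferentiableAt.comp z (g := EC) (EC_diffAt _ (im_add_div_two z hz)) (by fun_prop)
  exact (h2.div_const 2).sub h1

/-- Continuity at zero of a power series. -/
lemma pow_tendsto (u : ℕ → ℂ) (hu : Summable fun n => ‖u n‖ * (1 / 2 : ℝ) ^ n) :
    Tendsto (fun q : ℂ => ∑' n, u n * q ^ n) (𝓝 0) (𝓝 (u 0)) := by
  have hc : ContinuousOn (fun q : ℂ => ∑' n, u n * q ^ n) (Metric.ball 0 (1 / 2)) := by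
    refine continuousOn_tsum (fun n => by fun_prop) hu fun n q hq => ?_
    rw [norm_mul, norm_pow]
    have : ‖q‖ ≤ 1 / 2 := by simpa using (mem_ball_zero_iff.mp hq).le
    gcongr
  have h := (hc.continuousAt (Metric.ball_mem_nhds 0 (by norm_num))).tendsto
  have h0 : (∑' n, u n * (0 : ℂ) ^ n) = u 0 := by
    rw [tsum_eq_single 0]
    · simp
    · intro n hn; simp [hn]
  simpa only [h0] using h

lemma sigma_summable (r : ℝ) (hr : 0 ≤ r) (hr' : r < 1) :
    Summable fun n : ℕ => ((ArithmeticFunction.sigma 1 n : ℕ) : ℝ) * r ^ n := by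
  have h := summable_pow_mul_geometric_of_norm_lt_one (R := ℝ) 2 (r := r)
    (by rwa [Real.norm_of_nonneg hr])
  refine Summable.of_nonneg_of_le (fun n => by positivity) (fun n => ?_) h
  have : ArithmeticFunction.sigma 1 n ≤ n ^ 2 := by
    simpa using ArithmeticFunction.sigma_le_pow_succ 1 n
  gcongr
  exact_mod_cast this

lemma nome_tendsto : Tendsto nome imInf (𝓝 0) := by
  rw [tendsto_zero_iff_norm_tendsto_zero]
  have : (fun z => ‖nome z‖) = (fun y : ℝ => Real.exp (-(2 * π * y))) ∘ Complex.im := by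
    ext z
    simp [nome, Complex.norm_exp]
  rw [this]
  refine Tendsto.comp ?_ tendsto_comap
  refine Real.tendsto_exp_neg_atTop_nhds_zero.comp ?_
  exact tendsto_id.const_mul_atTop (by positivity)

lemma imInf_pos : ∀ᶠ z in imInf, 0 < z.im :=
  tendsto_comap.eventually (eventually_gt_atTop (0 : ℝ))

lemma EC_lim : Tendsto EC imInf (𝓝 1) := by
  have h := (pow_tendsto (fun m : ℕ => (if m = 0 then 1 else
    -24 * (ArithmeticFunction.sigma 1 m : ℂ))) (by
      rw [← summable_nat_add_iff 1]
      have := (summable_nat_add_iff 1).mpr (sigma_summable (1 / 2) (by norm_num) (by norm_num))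
      refine (this.mul_left 24).congr fun n => ?_
      simp
      ring)).comp nome_tendsto
  refine (h.congr' ?_).trans (by simp)
  filter_upwards [imInf_pos] with z hz
  exact (EC_hasSum z hz).tsum_eq

lemma imInf_two_mul : Tendsto (fun z : ℂ => 2 * z) imInf imInf := by
  rw [imInf, tendsto_comap_iff]
  have : Complex.im ∘ (fun z : ℂ => 2 * z) = (fun y : ℝ => 2 * y) ∘ Complex.im := by ext; simp
  rw [this]
  exact (tendsto_id.const_mul_atTop (by norm_num)).comp tendsto_comap

lemma imInf_div_two : Tendsto (fun z : ℂ => z / 2) imInf imInf := by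
  rw [imInf, tendsto_comap_iff]
  have : Complex.im ∘ (fun z : ℂ => z / 2) = (fun y : ℝ => y / 2) ∘ Complex.im := by ext; simp
  rw [this]
  exact (tendsto_id.atTop_div_const (by norm_num)).comp tendsto_comap

lemma imInf_add_div_two : Tendsto (fun z : ℂ => (z + 1) / 2) imInf imInf := by
  rw [imInf, tendsto_comap_iff]
  have : Complex.im ∘ (fun z : ℂ => (z + 1) / 2) = (fun y : ℝ => y / 2) ∘ Complex.im := by
    ext; simp
  rw [this]
  exact (tendsto_id.atTop_div_const (by norm_num)).comp tendsto_comap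

lemma ea_lim : Tendsto ea imInf (𝓝 1) := by
  have := ((EC_lim.comp imInf_two_mul).const_mul 2).sub EC_lim
  norm_num at this
  exact this

lemma eb_lim : Tendsto eb imInf (𝓝 (-1 / 2)) := by
  have := ((EC_lim.comp imInf_div_two).div_const 2).sub EC_lim
  rw [show (1 / 2 - 1 : ℂ) = -1 / 2 by norm_num] at this
  exact this

lemma ec_lim : Tendsto ec imInf (𝓝 (-1 / 2)) := by
  have := ((EC_lim.comp imInf_add_div_two).div_const 2).sub EC_lim
  rw [show (1 / 2 - 1 : ℂ) = -1 / 2 by norm_num] at this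
  exact this

lemma deriv_lim (f : ℂ → ℂ) (hf : ∀ z : ℂ, 0 < z.im → DifferentiableAt ℂ f z) (l : ℂ)
    (hl : Tendsto f imInf (𝓝 l)) : Tendsto (deriv f) imInf (𝓝 0) := by
  rw [Metric.tendsto_nhds]
  intro ε hε
  have h1 := (Metric.tendsto_nhds.mp hl) (ε / 2) (by positivity)
  rw [imInf, eventually_comap, eventually_atTop] at h1 ⊢
  obtain ⟨A, hA⟩ := h1
  refine ⟨max A 0 + 2, fun y hy z hzy => ?_⟩
  have key : ∀ w ∈ Metric.closedBall z 1, A ≤ w.im ∧ 0 < w.im := by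
    intro w hw
    have h2 : |(w - z).im| ≤ 1 :=
      (Complex.abs_im_le_norm _).trans (by simpa [dist_eq_norm] using hw)
    rw [abs_le, Complex.sub_im] at h2
    have := le_max_left A 0
    have := le_max_right A 0
    constructor <;> linarith
  have h3 : deriv f z = deriv (fun w => f w - l) z := by rw [deriv_sub_const]
  rw [dist_zero_right, h3]
  refine lt_of_le_of_lt (Complex.norm_deriv_le_of_forall_mem_sphere_norm_le (C := ε / 2)
    (zero_lt_one) ?_ ?_) (by linarith)
  · refine DifferentiableOn.diffContOnCl ?_
    rw [closure_ball _ one_ne_zero]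
    intro w hw
    exact ((hf w (key w hw).2).sub_const l).differentiableWithinAt
  · intro w hw
    have := hA _ (key w (Metric.sphere_subset_closedBall hw)).1 w rfl
    rw [dist_eq_norm] at this
    exact this.le

/-- The constant `1/(2πi)`. -/
def kap : ℂ := (2 * (π : ℂ) * I)⁻¹

lemma kap_cc : cc = 12 * kap := by
  have hpi : (π : ℂ) ≠ 0 := by exact_mod_cast Real.pi_ne_zero
  rw [cc, kap]
  field_simp
  norm_num

lemma deriv_S (f g : ℂ → ℂ) (hf : ∀ z : ℂ, 0 < z.im → DifferentiableAt ℂ f z)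
    (hg : ∀ z : ℂ, 0 < z.im → DifferentiableAt ℂ g z)
    (h : ∀ z : ℂ, 0 < z.im → f (-1 / z) = z ^ 2 * g z) (z : ℂ) (hz : 0 < z.im) :
    deriv f (-1 / z) = 2 * z ^ 3 * g z + z ^ 4 * deriv g z := by
  have hz0 : z ≠ 0 := by rintro rfl; simp at hz
  have h1 : HasDerivAt (fun w : ℂ => -1 / w) (1 / z ^ 2) z := by
    have := (hasDerivAt_inv hz0).neg
    refine (this.congr_deriv (by field_simp; )).congr_of_eventuallyEq ?_
    filter_upwards with w
    simp [neg_div]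
  have h2 : HasDerivAt (fun w : ℂ => f (-1 / w)) (deriv f (-1 / z) * (1 / z ^ 2)) z :=
    HasDerivAt.comp z (hf _ (im_S z hz)).hasDerivAt h1
  have h3 : HasDerivAt (fun w : ℂ => w ^ 2 * g w) (2 * z * g z + z ^ 2 * deriv g z) z := by
    exact ((hasDerivAt_pow 2 z).fun_mul (hg z hz).hasDerivAt).congr_deriv (by simp)
  have h4 : (fun w : ℂ => f (-1 / w)) =ᶠ[𝓝 z] (fun w : ℂ => w ^ 2 * g w) := by
    filter_upwards [UpperHalfPlane.isOpen_upperHalfPlaneSet.mem_nhds hz] with w hw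
    exact h w hw
  have h5 := h2.unique (h3.congr_of_eventuallyEq h4)
  have h6 : deriv f (-1 / z) = (deriv f (-1 / z) * (1 / z ^ 2)) * z ^ 2 := by field_simp
  rw [h6, h5]
  ring

lemma deriv_T (f g : ℂ → ℂ)
    (h : ∀ z : ℂ, 0 < z.im → f (z + 1) = g z) (z : ℂ) (hz : 0 < z.im) :
    deriv f (z + 1) = deriv g z := by
  rw [← deriv_comp_add_const]
  refine Filter.EventuallyEq.deriv_eq ?_
  filter_upwards [UpperHalfPlane.isOpen_upperHalfPlaneSet.mem_nhds hz] with w hw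
  exact h w hw

/-- Sum of squares. -/
def es (z : ℂ) : ℂ := ea z ^ 2 + eb z ^ 2 + ec z ^ 2
/-- Defects of the differential equations. -/
def ga (z : ℂ) : ℂ := kap * deriv ea z - EC z * ea z / 6 + ea z ^ 2 / 3 - es z / 9
/-- Defects of the differential equations. -/
def gb (z : ℂ) : ℂ := kap * deriv eb z - EC z * eb z / 6 + eb z ^ 2 / 3 - es z / 9
/-- Defects of the differential equations. -/
def gc (z : ℂ) : ℂ := kap * deriv ec z - EC z * ec z / 6 + ec z ^ 2 / 3 - es z / 9

lemma es_T (z : ℂ) (hz : 0 < z.im) : es (z + 1) = es z := by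
  rw [es, es, ea_T z hz, eb_T z hz, ec_T z hz]; ring
lemma es_S (z : ℂ) (hz : 0 < z.im) : es (-1 / z) = z ^ 4 * es z := by
  rw [es, es, ea_S z hz, eb_S z hz, ec_S z hz]; ring

lemma ga_T (z : ℂ) (hz : 0 < z.im) : ga (z + 1) = ga z := by
  rw [ga, ga, es_T z hz, ea_T z hz, EC_T z hz, deriv_T _ _ ea_T z hz]
lemma gb_T (z : ℂ) (hz : 0 < z.im) : gb (z + 1) = gc z := by
  rw [gb, gc, es_T z hz, eb_T z hz, EC_T z hz, deriv_T _ _ eb_T z hz]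
lemma gc_T (z : ℂ) (hz : 0 < z.im) : gc (z + 1) = gb z := by
  rw [gb, gc, es_T z hz, ec_T z hz, EC_T z hz, deriv_T _ _ ec_T z hz]

lemma ga_S (z : ℂ) (hz : 0 < z.im) : ga (-1 / z) = z ^ 4 * gb z := by
  rw [ga, gb, es_S z hz, ea_S z hz, EC_S z hz, deriv_S _ _ ea_diff eb_diff ea_S z hz, kap_cc]
  ring
lemma gb_S (z : ℂ) (hz : 0 < z.im) : gb (-1 / z) = z ^ 4 * ga z := by
  rw [ga, gb, es_S z hz, eb_S z hz, EC_S z hz, deriv_S _ _ eb_diff ea_diff eb_S z hz, kap_cc]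
  ring
lemma gc_S (z : ℂ) (hz : 0 < z.im) : gc (-1 / z) = z ^ 4 * gc z := by
  rw [gc, gc, es_S z hz, ec_S z hz, EC_S z hz, deriv_S _ _ ec_diff ec_diff ec_S z hz, kap_cc]
  ring

lemma ea_diffOn : DifferentiableOn ℂ ea UpperHalfPlane.upperHalfPlaneSet :=
  fun z hz => (ea_diff z hz).differentiableWithinAt
lemma eb_diffOn : DifferentiableOn ℂ eb UpperHalfPlane.upperHalfPlaneSet :=
  fun z hz => (eb_diff z hz).differentiableWithinAt
lemma ec_diffOn : DifferentiableOn ℂ ec UpperHalfPlane.upperHalfPlaneSet :=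
  fun z hz => (ec_diff z hz).differentiableWithinAt

lemma es_diffOn : DifferentiableOn ℂ es UpperHalfPlane.upperHalfPlaneSet :=
  ((ea_diffOn.pow 2).add (eb_diffOn.pow 2)).add (ec_diffOn.pow 2)

lemma g_diffOn (f : ℂ → ℂ) (hf : DifferentiableOn ℂ f UpperHalfPlane.upperHalfPlaneSet) :
    DifferentiableOn ℂ (fun z => kap * deriv f z - EC z * f z / 6 + f z ^ 2 / 3 - es z / 9)
      UpperHalfPlane.upperHalfPlaneSet := by
  have h1 := hf.deriv UpperHalfPlane.isOpen_upperHalfPlaneSet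
  have h2 := es_diffOn
  have h3 := EC_diff
  exact ((((h1.const_mul kap).sub ((h3.mul hf).div_const 6)).add ((hf.pow 2).div_const 3)).sub
    (h2.div_const 9))

lemma ga_diffOn : DifferentiableOn ℂ ga UpperHalfPlane.upperHalfPlaneSet := g_diffOn _ ea_diffOn
lemma gb_diffOn : DifferentiableOn ℂ gb UpperHalfPlane.upperHalfPlaneSet := g_diffOn _ eb_diffOn
lemma gc_diffOn : DifferentiableOn ℂ gc UpperHalfPlane.upperHalfPlaneSet := g_diffOn _ ec_diffOn

lemma es_lim : Tendsto es imInf (𝓝 (3 / 2)) := by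
  have := ((ea_lim.pow 2).add (eb_lim.pow 2)).add (ec_lim.pow 2)
  rw [show ((1 : ℂ) ^ 2 + (-1 / 2) ^ 2 + (-1 / 2) ^ 2) = 3 / 2 by norm_num] at this
  exact this

lemma g_lim (f : ℂ → ℂ) (hf : ∀ z : ℂ, 0 < z.im → DifferentiableAt ℂ f z) (l : ℂ)
    (hl : Tendsto f imInf (𝓝 l)) (h : -l / 6 + l ^ 2 / 3 - 1 / 6 = 0) :
    Tendsto (fun z => kap * deriv f z - EC z * f z / 6 + f z ^ 2 / 3 - es z / 9) imInf (𝓝 0) := by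
  have h1 := deriv_lim f hf l hl
  have := ((((h1.const_mul kap).sub ((EC_lim.mul hl).div_const 6)).add
    ((hl.pow 2).div_const 3)).sub (es_lim.div_const 9))
  rw [show kap * 0 - 1 * l / 6 + l ^ 2 / 3 - 3 / 2 / 9 = 0 by linear_combination h] at this
  exact this

lemma ga_lim : Tendsto ga imInf (𝓝 0) := g_lim _ ea_diff _ ea_lim (by norm_num)
lemma gb_lim : Tendsto gb imInf (𝓝 0) := g_lim _ eb_diff _ eb_lim (by norm_num)
lemma gc_lim : Tendsto gc imInf (𝓝 0) := g_lim _ ec_diff _ ec_lim (by norm_num)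

lemma e_sum (z : ℂ) (hz : 0 < z.im) : ea z + eb z + ec z = 0 := by
  refine key_zero 2 (by norm_num) (fun z => ea z + eb z + ec z)
    ((ea_diffOn.add eb_diffOn).add ec_diffOn) ?_ ?_ ?_ z hz
  · intro z hz
    simp only [ea_S z hz, eb_S z hz, ec_S z hz]; ring
  · intro z hz
    simp only [ea_T z hz, eb_T z hz, ec_T z hz]; ring
  · have := (ea_lim.add eb_lim).add ec_lim
    norm_num at this
    exact this

lemma ge_sum (z : ℂ) (hz : 0 < z.im) : ga z * ea z + gb z * eb z + gc z * ec z = 0 := by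
  refine key_zero 6 (by norm_num) (fun z => ga z * ea z + gb z * eb z + gc z * ec z)
    (((ga_diffOn.mul ea_diffOn).add (gb_diffOn.mul eb_diffOn)).add (gc_diffOn.mul ec_diffOn))
    ?_ ?_ ?_ z hz
  · intro z hz
    simp only [ea_S z hz, eb_S z hz, ec_S z hz, ga_S z hz, gb_S z hz, gc_S z hz]; ring
  · intro z hz
    simp only [ea_T z hz, eb_T z hz, ec_T z hz, ga_T z hz, gb_T z hz, gc_T z hz]; ring
  · have := ((ga_lim.mul ea_lim).add (gb_lim.mul eb_lim)).add (gc_lim.mul ec_lim)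
    norm_num at this
    exact this

lemma gg_sum (z : ℂ) (hz : 0 < z.im) : ga z ^ 2 + gb z ^ 2 + gc z ^ 2 = 0 := by
  refine key_zero 8 (by norm_num) (fun z => ga z ^ 2 + gb z ^ 2 + gc z ^ 2)
    (((ga_diffOn.pow 2).add (gb_diffOn.pow 2)).add (gc_diffOn.pow 2))
    ?_ ?_ ?_ z hz
  · intro z hz
    simp only [ga_S z hz, gb_S z hz, gc_S z hz]; ring
  · intro z hz
    simp only [ga_T z hz, gb_T z hz, gc_T z hz]; ring
  · have := ((ga_lim.pow 2).add (gb_lim.pow 2)).add (gc_lim.pow 2)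
    norm_num at this
    exact this

lemma gge_sum (z : ℂ) (hz : 0 < z.im) :
    ga z ^ 2 * ea z + gb z ^ 2 * eb z + gc z ^ 2 * ec z = 0 := by
  refine key_zero 10 (by norm_num) (fun z => ga z ^ 2 * ea z + gb z ^ 2 * eb z + gc z ^ 2 * ec z)
    ((((ga_diffOn.pow 2).mul ea_diffOn).add ((gb_diffOn.pow 2).mul eb_diffOn)).add
      ((gc_diffOn.pow 2).mul ec_diffOn))
    ?_ ?_ ?_ z hz
  · intro z hz
    simp only [ea_S z hz, eb_S z hz, ec_S z hz, ga_S z hz, gb_S z hz, gc_S z hz]; ring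
  · intro z hz
    simp only [ea_T z hz, eb_T z hz, ec_T z hz, ga_T z hz, gb_T z hz, gc_T z hz]; ring
  · have := (((ga_lim.pow 2).mul ea_lim).add ((gb_lim.pow 2).mul eb_lim)).add
      ((gc_lim.pow 2).mul ec_lim)
    norm_num at this
    exact this

lemma g_sum (z : ℂ) (hz : 0 < z.im) : ga z + gb z + gc z = 0 := by
  have h1 : deriv ea z + deriv eb z + deriv ec z = 0 := by
    have h2 := (((ea_diff z hz).hasDerivAt.add (eb_diff z hz).hasDerivAt).add
      (ec_diff z hz).hasDerivAt)
    have h3 : (ea + eb + ec) =ᶠ[𝓝 z] fun _ => (0 : ℂ) := by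
      filter_upwards [UpperHalfPlane.isOpen_upperHalfPlaneSet.mem_nhds hz] with w hw
      exact e_sum w hw
    exact h2.unique ((hasDerivAt_const z (0 : ℂ)).congr_of_eventuallyEq h3)
  have h2 := e_sum z hz
  rw [ga, gb, gc, es]
  linear_combination kap * h1 - EC z / 6 * h2

lemma algebra_aux (x y w a b c : ℂ) (h1 : x + y + w = 0) (h2 : x ^ 2 + y ^ 2 + w ^ 2 = 0)
    (h3 : a + b + c = 0) (h4 : x * a + y * b + w * c = 0)
    (h5 : x ^ 2 * a + y ^ 2 * b + w ^ 2 * c = 0) (hx : x ≠ 0) : a = 0 ∧ b = 0 ∧ c = 0 := by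
  have hyw : y * w = x ^ 2 := by
    linear_combination (y + w - x) / 2 * h1 - h2 / 2
  have hy : y ≠ 0 := by rintro rfl; apply hx; simpa using hyw.symm
  have hw : w ≠ 0 := by rintro rfl; apply hx; simpa using hyw.symm
  have ha : 3 * x ^ 2 * a = 0 := by
    linear_combination h5 - (y + w) * h4 + y * w * h3 + a * x * h1 - a * hyw
  have hxw : x * w = y ^ 2 := by
    linear_combination (x + w - y) / 2 * h1 - h2 / 2
  have hxy : x * y = w ^ 2 := by
    linear_combination (x + y - w) / 2 * h1 - h2 / 2
  have hb : 3 * y ^ 2 * b = 0 := by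
    linear_combination h5 - (x + w) * h4 + x * w * h3 + b * y * h1 - b * hxw
  have hc : 3 * w ^ 2 * c = 0 := by
    linear_combination h5 - (x + y) * h4 + x * y * h3 + c * w * h1 - c * hxy
  refine ⟨by simpa [hx] using ha, by simpa [hy] using hb, by simpa [hw] using hc⟩

lemma ga_zero (z : ℂ) (hz : 0 < z.im) : ga z = 0 := by
  by_contra hne
  have hnhds := UpperHalfPlane.isOpen_upperHalfPlaneSet.mem_nhds hz
  have hc : ContinuousAt ga z := (ga_diffOn.differentiableAt hnhds).continuousAt
  have h0 : ∀ᶠ w in 𝓝 z, ea w = 0 ∧ eb w = 0 ∧ ec w = 0 := by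
    filter_upwards [hc.eventually_ne hne, hnhds] with w hw hw'
    exact algebra_aux _ _ _ _ _ _ (g_sum w hw') (gg_sum w hw') (e_sum w hw') (ge_sum w hw')
      (gge_sum w hw') hw
  have h1 : ea =ᶠ[𝓝 z] fun _ => (0 : ℂ) := h0.mono fun w hw => hw.1
  have h2 := h1.deriv_eq
  obtain ⟨h3, h4, h5⟩ := h0.self_of_nhds
  apply hne
  rw [ga, es, h2, h3, h4, h5]
  simp

lemma gbc_zero (z : ℂ) (hz : 0 < z.im) : gb z = 0 ∧ gc z = 0 := by
  have h1 := g_sum z hz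
  have h2 := gg_sum z hz
  rw [ga_zero z hz] at h1 h2
  have h3 : gb z ^ 2 = 0 := by linear_combination h2 / 2 + (gb z - gc z) / 2 * h1
  have h4 : gb z = 0 := by simpa using h3
  refine ⟨h4, ?_⟩
  rw [h4] at h1
  simpa using h1

lemma nome_two_mul (z : ℂ) : nome (2 * z) = nome z ^ 2 := by
  rw [nome, nome, ← Complex.exp_nat_mul]; congr 1; push_cast; ring

lemma nome_add_half (z : ℂ) : nome (z + 1 / 2) = -nome z := by
  rw [nome, nome, show 2 * (π : ℂ) * I * (z + 1 / 2) = 2 * (π : ℂ) * I * z + π * I by ring,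
    Complex.exp_add, Complex.exp_pi_mul_I]
  ring

lemma sigmaOdd_odd (n : ℕ) (h : ¬ Even n) : sigmaOdd n = ArithmeticFunction.sigma 1 n := by
  rw [sigmaOdd, ArithmeticFunction.sigma_one_apply, Finset.filter_true_of_mem]
  intro d hd
  exact Odd.of_dvd_nat (Nat.not_even_iff_odd.mp h) (Nat.dvd_of_mem_divisors hd)

lemma sigmaOdd_even (m : ℕ) (hm : m ≠ 0) :
    sigmaOdd (2 * m) + 2 * ArithmeticFunction.sigma 1 m = ArithmeticFunction.sigma 1 (2 * m) := by
  rw [sigmaOdd, ArithmeticFunction.sigma_one_apply, ArithmeticFunction.sigma_one_apply,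
    ← Finset.sum_filter_add_sum_filter_not (2 * m).divisors (fun d => Odd d)]
  congr 1
  rw [Finset.mul_sum]
  refine Finset.sum_bij (fun d _ => 2 * d) ?_ ?_ ?_ ?_
  · intro d hd
    have := Nat.dvd_of_mem_divisors hd
    simp only [Finset.mem_filter, Nat.mem_divisors]
    exact ⟨⟨Nat.mul_dvd_mul_left 2 this, by omega⟩, by simp⟩
  · intro a _ b _ h
    simpa using h
  · intro b hb
    simp only [Finset.mem_filter, Nat.mem_divisors, Nat.not_odd_iff_even] at hb
    obtain ⟨⟨h1, h2⟩, h3⟩ := hb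
    obtain ⟨c, rfl⟩ := h3.two_dvd
    exact ⟨c, by simpa [hm] using Nat.dvd_of_mul_dvd_mul_left (by norm_num) h1, rfl⟩
  · intros; rfl

lemma Estar_eq (z : ℂ) (hz : 0 < z.im) : Estar z = ea z := by
  have h1 := EC_hasSum z hz
  have h2 := EC_hasSum (2 * z) (im_two_mul z hz)
  have hinj : Function.Injective (fun n : ℕ => 2 * n) := fun a b h => by simpa using h
  let c : ℕ → ℂ := fun m => if m = 0 then 1 else -24 * (ArithmeticFunction.sigma 1 m : ℂ)
  let F : ℕ → ℂ := fun n => if Even n then c (n / 2) * nome z ^ n else 0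
  have h3 : HasSum F (EC (2 * z)) := by
    rw [← hinj.hasSum_iff]
    · refine h2.congr_fun ?_
      intro m
      have h : Even (2 * m) := even_two_mul m
      simp only [F, c, Function.comp, h, if_true, nome_two_mul, ← pow_mul,
        Nat.mul_div_cancel_left m (by norm_num : 0 < 2)]
    · intro x hx
      have : ¬ Even x := fun h => hx ⟨x / 2, Nat.two_mul_div_two_of_even h⟩
      simp [F, this]
  have h4 := (h3.mul_left 2).sub h1
  have h5 : HasSum (fun n : ℕ => (if n = 0 then 1 else 24 * (sigmaOdd n : ℂ)) * nome z ^ n)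
      (ea z) := by
    rw [ea]
    refine HasSum.congr_fun h4 ?_
    intro n
    rcases eq_or_ne n 0 with rfl | hn
    · simp [F, c]; norm_num
    · by_cases he : Even n
      · obtain ⟨m, rfl⟩ := he.two_dvd
        have hm : m ≠ 0 := by omega
        have := congrArg (Nat.cast : ℕ → ℂ) (sigmaOdd_even m hm)
        push_cast at this
        simp only [F, c, hm, hn, he, if_true, if_false,
          Nat.mul_div_cancel_left m (by norm_num : 0 < 2)]
        linear_combination 24 * nome z ^ (2 * m) * this
      · simp [F, he, hn, sigmaOdd_odd n he]
  have h6 := (hasSum_nat_add_iff' 1).mpr h5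
  simp only [Finset.sum_range_one, if_true, pow_zero, mul_one, Nat.add_eq_zero_iff, one_ne_zero,
    and_false, if_false, mul_assoc] at h6
  rw [Estar, ← tsum_mul_left, h6.tsum_eq]
  ring

lemma Eodd_hasSum (z : ℂ) (hz : 0 < z.im) :
    HasSum (fun n : ℕ => (ArithmeticFunction.sigma 1 (2 * n + 1) : ℂ) * nome z ^ (2 * n + 1))
      ((ec (2 * z) - eb (2 * z)) / 24) := by
  have h1 := EC_hasSum z hz
  have h2 := EC_hasSum (z + 1 / 2) (by simpa using hz)
  rw [nome_add_half] at h2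
  have h3 := (h2.sub h1).div_const 48
  have hinj : Function.Injective (fun n : ℕ => 2 * n + 1) := fun a b h => by simpa using h
  rw [← hinj.hasSum_iff] at h3
  · have e : (ec (2 * z) - eb (2 * z)) / 24 = (EC (z + 1 / 2) - EC z) / 48 := by
      rw [ec, eb, show (2 * z + 1) / 2 = z + 1 / 2 by ring, show 2 * z / 2 = z by ring]; ring
    rw [e]
    refine HasSum.congr_fun h3 ?_
    intro n
    have : (-nome z) ^ (2 * n + 1) = - nome z ^ (2 * n + 1) := Odd.neg_pow ⟨n, rfl⟩ _
    simp only [Function.comp, this, Nat.add_eq_zero_iff, one_ne_zero, and_false, if_false]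
    ring
  · intro x hx
    have : Even x := by
      by_contra h
      obtain ⟨k, hk⟩ := Nat.not_even_iff_odd.mp h
      exact hx ⟨k, hk.symm⟩
    simp [this.neg_pow]

lemma Eodd_eq (z : ℂ) (hz : 0 < z.im) : Eodd z = (ec (2 * z) - eb (2 * z)) / 24 := by
  rw [← (Eodd_hasSum z hz).tsum_eq, Eodd]
  simp only [ArithmeticFunction.sigma_one_apply]

lemma kap_ne : kap ≠ 0 := by
  have hpi : (π : ℂ) ≠ 0 := by exact_mod_cast Real.pi_ne_zero
  rw [kap]
  simp [hpi]

lemma comp2_deriv (f : ℂ → ℂ) (hf : ∀ z : ℂ, 0 < z.im → DifferentiableAt ℂ f z) (z : ℂ)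
    (hz : 0 < z.im) : HasDerivAt (fun w => f (2 * w)) (2 * deriv f (2 * z)) z := by
  have h1 : HasDerivAt (fun w : ℂ => 2 * w) 2 z := by
    simpa using (hasDerivAt_id z).const_mul (2 : ℂ)
  have := HasDerivAt.comp z (hf _ (im_two_mul z hz)).hasDerivAt h1
  exact this.congr_deriv (by ring)

/-- The common logarithmic derivative. -/
def LL (z : ℂ) : ℂ := (EC (2 * z) + 2 * ea (2 * z)) / 3

lemma F_deriv (z : ℂ) (hz : 0 < z.im) : HasDerivAt (fun w => Estar (2 * w))
    (kap⁻¹ * (LL z * Estar (2 * z) - Estar (2 * z) ^ 2 + 64 * Eodd z ^ 2)) z := by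
  have ht := im_two_mul z hz
  have h := comp2_deriv ea ea_diff z hz
  have h1 : (fun w => Estar (2 * w)) =ᶠ[𝓝 z] (fun w => ea (2 * w)) := by
    filter_upwards [UpperHalfPlane.isOpen_upperHalfPlaneSet.mem_nhds hz] with w hw
    exact Estar_eq _ (im_two_mul w hw)
  refine (h.congr_of_eventuallyEq h1).congr_deriv ?_
  rw [eq_inv_mul_iff_mul_eq₀ kap_ne, Estar_eq _ ht, Eodd_eq z hz, LL]
  have h2 := ga_zero _ ht
  have h3 := e_sum _ ht
  rw [ga, es] at h2
  generalize ea (2 * z) = a at *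
  generalize eb (2 * z) = b at *
  generalize ec (2 * z) = c at *
  linear_combination 2 * h2 + (b + c - a) / 9 * h3

lemma E_deriv (z : ℂ) (hz : 0 < z.im) : HasDerivAt Eodd (kap⁻¹ * (LL z * Eodd z)) z := by
  have ht := im_two_mul z hz
  have h := ((comp2_deriv ec ec_diff z hz).sub (comp2_deriv eb eb_diff z hz)).div_const 24
  have h1 : Eodd =ᶠ[𝓝 z] (fun w => (ec (2 * w) - eb (2 * w)) / 24) := by
    filter_upwards [UpperHalfPlane.isOpen_upperHalfPlaneSet.mem_nhds hz] with w hw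
    exact Eodd_eq w hw
  refine (HasDerivAt.congr_of_eventuallyEq h h1).congr_deriv ?_
  rw [eq_inv_mul_iff_mul_eq₀ kap_ne, Eodd_eq z hz, LL]
  obtain ⟨h2, h2'⟩ := gbc_zero _ ht
  have h3 := e_sum _ ht
  rw [gb, es] at h2
  rw [gc, es] at h2'
  generalize ea (2 * z) = a at *
  generalize eb (2 * z) = b at *
  generalize ec (2 * z) = c at *
  linear_combination (h2' - h2) / 12 - (c - b) / 36 * h3

/-- The Euler product. -/
def Phi (q : ℂ) : ℂ := ∏' n : ℕ, (1 - q ^ (n + 1))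

lemma Phi_tendsto : Tendsto Phi (𝓝 0) (𝓝 1) := by
  have h : ContinuousAt Phi 0 := (ModularForm.differentiableOn_tprod_one_sub_pow.differentiableAt
    (Metric.ball_mem_nhds 0 (by norm_num))).continuousAt
  have h0 : Phi 0 = 1 := by simp [Phi]
  have := h.tendsto
  rwa [h0] at this

lemma eta_eq : dedekindEta = ModularForm.eta := by
  funext z
  rw [dedekindEta, ModularForm.eta]
  congr 1
  · rw [Function.Periodic.qParam]
    congr 1
    push_cast
    ring
  · simp only [ModularForm.eta_q_eq_pow, nome]

lemma eta_ne (z : ℂ) (hz : 0 < z.im) : dedekindEta z ≠ 0 := by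
  rw [eta_eq]; exact ModularForm.eta_ne_zero hz

lemma eta_deriv (z : ℂ) (hz : 0 < z.im) :
    HasDerivAt dedekindEta (π * I / 12 * EC z * dedekindEta z) z := by
  have hne := eta_ne z hz
  rw [eta_eq] at hne ⊢
  have h1 := (ModularForm.differentiableAt_eta_of_mem_upperHalfPlaneSet hz).hasDerivAt
  refine h1.congr_deriv ?_
  have h2 := ModularForm.logDeriv_eta_eq_E2 ⟨z, hz⟩
  rw [← EC_eq z hz, logDeriv_apply] at h2
  exact (div_eq_iff hne).mp h2

/-- The eta quotient. -/
def GG (z : ℂ) : ℂ := dedekindEta (4 * z) ^ 8 / dedekindEta (2 * z) ^ 4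

lemma im_four_mul (z : ℂ) (hz : 0 < z.im) : 0 < (4 * z).im := by
  simpa using hz

lemma GG_ne (z : ℂ) (hz : 0 < z.im) : GG z ≠ 0 :=
  div_ne_zero (pow_ne_zero _ (eta_ne _ (im_four_mul z hz)))
    (pow_ne_zero _ (eta_ne _ (im_two_mul z hz)))

lemma GG_deriv (z : ℂ) (hz : 0 < z.im) : HasDerivAt GG (kap⁻¹ * (LL z * GG z)) z := by
  have hl (c : ℂ) : HasDerivAt (fun w : ℂ => c * w) c z := by
    simpa using (hasDerivAt_id z).const_mul c
  have h2 := HasDerivAt.comp z (eta_deriv _ (im_two_mul z hz)) (hl 2)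
  have h4 := HasDerivAt.comp z (eta_deriv _ (im_four_mul z hz)) (hl 4)
  have n2 := eta_ne _ (im_two_mul z hz)
  have n4 := eta_ne _ (im_four_mul z hz)
  have h := (h4.fun_pow 8).fun_div (h2.fun_pow 4) (pow_ne_zero _ n2)
  refine HasDerivAt.congr_deriv (f := GG) h ?_
  simp only [Function.comp, GG, LL, ea, kap, inv_inv, show 2 * (2 * z) = 4 * z by ring]
  generalize dedekindEta (2 * z) = x at n2 ⊢
  generalize dedekindEta (4 * z) = y at n4 ⊢
  norm_num
  field_simp
  ring

lemma nome_ne (z : ℂ) : nome z ≠ 0 := Complex.exp_ne_zero _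

lemma nome_two_tendsto : Tendsto (fun z => nome (2 * z)) imInf (𝓝 0) :=
  nome_tendsto.comp imInf_two_mul

lemma nome_four_tendsto : Tendsto (fun z => nome (4 * z)) imInf (𝓝 0) := by
  have := nome_two_tendsto.comp imInf_two_mul
  refine this.congr fun z => ?_
  simp only [Function.comp]
  congr 1; ring

lemma GG_eq (z : ℂ) :
    GG z / nome z = Phi (nome (4 * z)) ^ 8 / Phi (nome (2 * z)) ^ 4 := by
  have h1 (w : ℂ) : dedekindEta w = Complex.exp ((π : ℂ) * I * w / 12) * Phi (nome w) := rfl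
  have h2 : Complex.exp ((π : ℂ) * I * (4 * z) / 12) ^ 8 =
      nome z * Complex.exp ((π : ℂ) * I * (2 * z) / 12) ^ 4 := by
    rw [nome, ← Complex.exp_nat_mul, ← Complex.exp_nat_mul, ← Complex.exp_add]
    congr 1
    push_cast
    ring
  have h3 := Complex.exp_ne_zero ((π : ℂ) * I * (2 * z) / 12)
  have h4 := nome_ne z
  rw [GG, h1, h1, mul_pow, mul_pow, h2]
  field_simp

lemma GG_lim : Tendsto (fun z => GG z / nome z) imInf (𝓝 1) := by
  simp only [GG_eq]
  have h := ((Phi_tendsto.comp nome_four_tendsto).pow 8).div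
    ((Phi_tendsto.comp nome_two_tendsto).pow 4) (by norm_num)
  norm_num at h
  exact h

lemma Eodd_lim : Tendsto (fun z => Eodd z / nome z) imInf (𝓝 1) := by
  have h := pow_tendsto (fun n : ℕ => (ArithmeticFunction.sigma 1 (2 * n + 1) : ℂ)) (by
    have hinj : Function.Injective (fun n : ℕ => 2 * n + 1) := fun a b h => by simpa using h
    have := ((sigma_summable (3 / 4) (by norm_num) (by norm_num)).comp_injective hinj).mul_left 2
    refine Summable.of_nonneg_of_le (fun n => by positivity) (fun n => ?_) this
    simp only [Function.comp, Complex.norm_natCast]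
    have h2 : (1 / 2 : ℝ) ^ n ≤ 2 * (3 / 4) ^ (2 * n + 1) := by
      have : (1 / 2 : ℝ) ^ n ≤ (9 / 16) ^ n :=
        pow_le_pow_left₀ (by norm_num) (by norm_num) n
      have h9 : (0 : ℝ) ≤ (9 / 16) ^ n := by positivity
      rw [pow_succ, pow_mul, show ((3 : ℝ) / 4) ^ 2 = 9 / 16 by norm_num]
      linarith
    calc _ ≤ ((ArithmeticFunction.sigma 1 (2 * n + 1) : ℕ) : ℝ) * (2 * (3 / 4) ^ (2 * n + 1)) := by
          gcongr
      _ = _ := by ring)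
  have h1 := h.comp nome_two_tendsto
  simp only [mul_zero, zero_add, ArithmeticFunction.sigma_one, Nat.cast_one] at h1
  refine h1.congr fun z => ?_
  rw [Eodd, eq_div_iff (nome_ne z)]
  simp only [Function.comp]
  rw [← tsum_mul_right]
  refine tsum_congr fun n => ?_
  rw [ArithmeticFunction.sigma_one_apply, nome_two_mul]
  ring

instance imInf_neBot : imInf.NeBot :=
  Filter.NeBot.comap_of_surj atTop_neBot fun y => ⟨⟨0, y⟩, rfl⟩

lemma Eodd_eq_GG (z : ℂ) (hz : 0 < z.im) : Eodd z = GG z := by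
  have hd : ∀ w : ℂ, 0 < w.im → HasDerivAt (fun w => Eodd w / GG w) 0 w := by
    intro w hw
    have hne := GG_ne w hw
    refine ((E_deriv w hw).fun_div (GG_deriv w hw) hne).congr_deriv ?_
    rw [div_eq_zero_iff]
    left
    ring
  have hconn : IsPreconnected UpperHalfPlane.upperHalfPlaneSet :=
    (convex_halfSpace_im_gt 0).isPreconnected
  have hc : ∀ w : ℂ, 0 < w.im → Eodd w / GG w = Eodd z / GG z := fun w hw =>
    UpperHalfPlane.isOpen_upperHalfPlaneSet.is_const_of_deriv_eq_zero hconn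
      (fun x hx => (hd x hx).differentiableAt.differentiableWithinAt)
      (fun x hx => (hd x hx).deriv) hw hz
  have hl := Eodd_lim.div GG_lim one_ne_zero
  have hl2 : Tendsto (fun w => Eodd w / nome w / (GG w / nome w)) imInf (𝓝 (Eodd z / GG z)) := by
    refine tendsto_const_nhds.congr' ?_
    filter_upwards [imInf_pos] with w hw
    rw [div_div_div_cancel_right₀ (nome_ne w)]
    exact (hc w hw).symm
  have h := tendsto_nhds_unique hl2 hl
  rw [div_one] at h
  exact (div_eq_one_iff_eq (GG_ne z hz)).mp h

/-- For `τ ∈ ℍ`: `(q d/dq) h(τ) = −E_odd(τ)(h(τ)² − 64)`, with `q d/dq = (2πi)⁻¹ d/dτ`. -/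
theorem stmt13 (τ : ℂ) (hτ : 0 < τ.im) :
    (1 / (2 * (π : ℂ) * I)) * deriv hfun τ = -Eodd τ * (hfun τ ^ 2 - 64) := by
  have heq : ∀ w : ℂ, 0 < w.im → hfun w = Estar (2 * w) / Eodd w := by
    intro w hw
    rw [Eodd_eq_GG w hw, hfun, GG]
    field_simp
  have hE : Eodd τ ≠ 0 := by rw [Eodd_eq_GG τ hτ]; exact GG_ne τ hτ
  have h1 : hfun =ᶠ[𝓝 τ] fun w => Estar (2 * w) / Eodd w := by
    filter_upwards [UpperHalfPlane.isOpen_upperHalfPlaneSet.mem_nhds hτ] with w hw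
    exact heq w hw
  have h2 := ((F_deriv τ hτ).fun_div (E_deriv τ hτ) hE).congr_of_eventuallyEq h1
  have hk := kap_ne
  rw [h2.deriv, heq τ hτ, one_div, ← kap]
  field_simp
  ring
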